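/- In the OMP-step setting, the l-th entry of u = Aᵀ A x* satisfies |u_l| ≥ (1 − δ − δ/γ) · |x*_l|. -/

import Mathlib

/-!
The Gram operator `G` of the columns of `A` indexed by the support of `x*` satisfies
`⟪(G - 1) v, v⟫ = ‖A v‖² - ‖v‖²`, so the restricted isometry property bounds the numerical radius
of the self-adjoint operator `G - 1`, which is its norm, by `δ`. Since `u - x*` agrees with
`(G - 1) x*` on the support, `|u_l - x*_l| ≤ δ ‖x*‖` there, and dominance gives
`‖x*‖ ≤ √(1 + γ⁻²) |x*_l| ≤ (1 + 1/γ) |x*_l|`.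
-/

open Matrix Finset

/-- The support of a vector, as a `Finset`. -/
noncomputable def suppF {N : ℕ} (x : Fin N → ℝ) : Finset (Fin N) :=
  Finset.univ.filter fun i => x i ≠ 0

/-- The Euclidean norm of the restriction of `v` to the index set `T`. -/
noncomputable def pnorm {N : ℕ} (T : Finset (Fin N)) (v : Fin N → ℝ) : ℝ :=
  Real.sqrt (∑ i ∈ T, v i ^ 2)

open ContinuousLinearMap WithLp

section NearIsometry

variable {𝕜 E F : Type*} [RCLike 𝕜] [NormedAddCommGroup E] [InnerProductSpace 𝕜 E]
  [CompleteSpace E] [NormedAddCommGroup F] [InnerProductSpace 𝕜 F]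

theorem norm_adjoint_comp_self_sub_one_le [CompleteSpace F] {T : F →L[𝕜] E} {δ : ℝ}
    (hδ : 0 ≤ δ) (hT : ∀ v, |‖T v‖ ^ 2 - ‖v‖ ^ 2| ≤ δ * ‖v‖ ^ 2) : ‖adjoint T ∘L T - 1‖ ≤ δ := by
  have hsymm : (adjoint T ∘L T - 1).IsSymmetric :=
    (isPositive_adjoint_comp_self T).isSymmetric.sub LinearMap.IsSymmetric.one
  rw [norm_eq_iSup_rayleighQuotient _ hsymm]
  refine ciSup_le fun v ↦ ?_
  have hv : (adjoint T ∘L T - 1).reApplyInnerSelf v = ‖T v‖ ^ 2 - ‖v‖ ^ 2 := by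
    simp [reApplyInnerSelf_apply, inner_sub_left, adjoint_inner_left]
  rw [rayleighQuotient, hv, abs_div, abs_sq]
  exact div_le_of_le_mul₀ (sq_nonneg _) hδ (hT v)

theorem norm_inner_map_map_sub_inner_le [CompleteSpace F] {T : F →L[𝕜] E} {δ : ℝ}
    (hT : ∀ v, |‖T v‖ ^ 2 - ‖v‖ ^ 2| ≤ δ * ‖v‖ ^ 2) (x y : F) :
    ‖inner 𝕜 (T x) (T y) - inner 𝕜 x y‖ ≤ δ * ‖x‖ * ‖y‖ := by
  obtain rfl | hx := eq_or_ne x 0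
  · simp
  have hδ : 0 ≤ δ := nonneg_of_mul_nonneg_left ((abs_nonneg _).trans (hT x)) (by positivity)
  calc ‖inner 𝕜 (T x) (T y) - inner 𝕜 x y‖ = ‖inner 𝕜 ((adjoint T ∘L T - 1) x) y‖ := by
        simp [inner_sub_left, adjoint_inner_left]
    _ ≤ ‖(adjoint T ∘L T - 1) x‖ * ‖y‖ := norm_inner_le_norm _ _
    _ ≤ δ * ‖x‖ * ‖y‖ := by
        gcongr
        exact le_of_opNorm_le _ (norm_adjoint_comp_self_sub_one_le hδ hT) x

theorem norm_inner_map_map_sub_inner_le_of_mem {T : F →L[𝕜] E} {V : Submodule 𝕜 F}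
    [CompleteSpace V] {δ : ℝ} (hT : ∀ v ∈ V, |‖T v‖ ^ 2 - ‖v‖ ^ 2| ≤ δ * ‖v‖ ^ 2) {x y : F}
    (hx : x ∈ V) (hy : y ∈ V) :
    ‖inner 𝕜 (T x) (T y) - inner 𝕜 x y‖ ≤ δ * ‖x‖ * ‖y‖ :=
  norm_inner_map_map_sub_inner_le (T := T ∘L V.subtypeL) (fun v ↦ hT v v.2) ⟨x, hx⟩ ⟨y, hy⟩

end NearIsometry

section EuclideanSpace

variable {𝕜 ι : Type*} [RCLike 𝕜] [Fintype ι] [DecidableEq ι]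

theorem norm_sub_single_self_sq (x : EuclideanSpace 𝕜 ι) (l : ι) :
    ‖x - EuclideanSpace.single l (x l)‖ ^ 2 = ‖x‖ ^ 2 - ‖x l‖ ^ 2 := by
  have hre : RCLike.re (inner 𝕜 x (EuclideanSpace.single l (x l))) = ‖x l‖ ^ 2 := by
    rw [EuclideanSpace.inner_single_right, RCLike.mul_conj]
    norm_cast
  rw [norm_sub_sq (𝕜 := 𝕜), hre, PiLp.norm_single]
  ring

theorem norm_le_sqrt_mul_norm_apply {x : EuclideanSpace 𝕜 ι} {l : ι} {γ : ℝ} (hγ : 0 < γ)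
    (hdom : γ * ‖x - EuclideanSpace.single l (x l)‖ ≤ ‖x l‖) :
    ‖x‖ ≤ √(1 + γ⁻¹ ^ 2) * ‖x l‖ := by
  have hrest : ‖x - EuclideanSpace.single l (x l)‖ ≤ γ⁻¹ * ‖x l‖ := (le_inv_mul_iff₀ hγ).2 hdom
  have hsq : ‖x‖ ^ 2 ≤ (1 + γ⁻¹ ^ 2) * ‖x l‖ ^ 2 :=
    calc ‖x‖ ^ 2 = ‖x l‖ ^ 2 + ‖x - EuclideanSpace.single l (x l)‖ ^ 2 := by
          rw [norm_sub_single_self_sq]; ring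
      _ ≤ ‖x l‖ ^ 2 + (γ⁻¹ * ‖x l‖) ^ 2 := by gcongr
      _ = (1 + γ⁻¹ ^ 2) * ‖x l‖ ^ 2 := by ring
  calc ‖x‖ ≤ √((1 + γ⁻¹ ^ 2) * ‖x l‖ ^ 2) := Real.le_sqrt_of_sq_le hsq
    _ = √(1 + γ⁻¹ ^ 2) * ‖x l‖ := by
      rw [Real.sqrt_mul (by positivity), Real.sqrt_sq (norm_nonneg _)]

end EuclideanSpace

/-- The restricted isometry property of order `k` with constant `δ`: on `k`-sparse vectors, `T`
preserves squared norms up to the relative error `δ`. -/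
def RestrictedIsometry {𝕜 ι E : Type*} [RCLike 𝕜] [Fintype ι] [NormedAddCommGroup E]
    [NormedSpace 𝕜 E] (T : EuclideanSpace 𝕜 ι →L[𝕜] E) (k : ℕ) (δ : ℝ) : Prop :=
  ∀ v : EuclideanSpace 𝕜 ι, (Function.support v).ncard ≤ k → |‖T v‖ ^ 2 - ‖v‖ ^ 2| ≤ δ * ‖v‖ ^ 2

namespace RestrictedIsometry

variable {𝕜 ι E : Type*} [RCLike 𝕜] [Fintype ι] [NormedAddCommGroup E] {k : ℕ} {δ : ℝ}

theorem mono [NormedSpace 𝕜 E] {T : EuclideanSpace 𝕜 ι →L[𝕜] E} (hT : RestrictedIsometry T k δ)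
    {j : ℕ} (hjk : j ≤ k) : RestrictedIsometry T j δ :=
  fun v hv ↦ hT v (hv.trans hjk)

variable [InnerProductSpace 𝕜 E] [CompleteSpace E] {T : EuclideanSpace 𝕜 ι →L[𝕜] E}

theorem norm_inner_map_map_sub_inner_le (hT : RestrictedIsometry T k δ) {x y : EuclideanSpace 𝕜 ι}
    (hxy : (Function.support x ∪ Function.support y).ncard ≤ k) :
    ‖inner 𝕜 (T x) (T y) - inner 𝕜 x y‖ ≤ δ * ‖x‖ * ‖y‖ := by
  have hspan : ∀ v ∈ Submodule.span 𝕜 {x, y}, |‖T v‖ ^ 2 - ‖v‖ ^ 2| ≤ δ * ‖v‖ ^ 2 := by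
    intro v hv
    obtain ⟨a, b, rfl⟩ := Submodule.mem_span_pair.1 hv
    refine hT _ ((Set.ncard_le_ncard ?_).trans hxy)
    exact (Function.support_add _ _).trans
      (Set.union_subset_union (Function.support_const_smul_subset a x)
        (Function.support_const_smul_subset b y))
  exact norm_inner_map_map_sub_inner_le_of_mem hspan (Submodule.mem_span_of_mem (by simp))
    (Submodule.mem_span_of_mem (by simp))

theorem norm_adjoint_apply_apply_sub_le (hT : RestrictedIsometry T k δ) {x : EuclideanSpace 𝕜 ι}
    (hx : (Function.support x).ncard ≤ k) {l : ι} (hl : x l ≠ 0) :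
    ‖adjoint T (T x) l - x l‖ ≤ δ * ‖x‖ := by
  classical
  let e : EuclideanSpace 𝕜 ι := EuclideanSpace.single l 1
  have hsupp : Function.support e ∪ Function.support x = Function.support x :=
    Set.union_eq_right.2 (Pi.support_single_subset.trans (Set.singleton_subset_iff.2 hl))
  have h := hT.norm_inner_map_map_sub_inner_le (hsupp ▸ hx)
  rw [← adjoint_inner_right] at h
  simpa [e, EuclideanSpace.inner_single_left] using h

end RestrictedIsometry

theorem stmt17_general {𝕜 ι E : Type*} [RCLike 𝕜] [Fintype ι] [DecidableEq ι]
    [NormedAddCommGroup E] [InnerProductSpace 𝕜 E] [CompleteSpace E]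
    {T : EuclideanSpace 𝕜 ι →L[𝕜] E} {s : ℕ} {δ γ : ℝ} (hγ : 0 < γ)
    (hT : RestrictedIsometry T s δ) {x : EuclideanSpace 𝕜 ι}
    (hx : (Function.support x).ncard ≤ s) {l : ι}
    (hdom : γ * ‖x - EuclideanSpace.single l (x l)‖ ≤ ‖x l‖) :
    (1 - δ * √(1 + γ⁻¹ ^ 2)) * ‖x l‖ ≤ ‖adjoint T (T x) l‖ := by
  obtain hl | hl := eq_or_ne (x l) 0
  · simp [hl]
  have hgram : ‖adjoint T (T x) l - x l‖ ≤ δ * ‖x‖ := hT.norm_adjoint_apply_apply_sub_le hx hl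
  have hδ : 0 ≤ δ := nonneg_of_mul_nonneg_left ((norm_nonneg _).trans hgram)
    (norm_pos_iff.2 fun h ↦ hl (by simp [h]))
  calc (1 - δ * √(1 + γ⁻¹ ^ 2)) * ‖x l‖ = ‖x l‖ - δ * (√(1 + γ⁻¹ ^ 2) * ‖x l‖) := by ring
    _ ≤ ‖x l‖ - δ * ‖x‖ := by gcongr; exact norm_le_sqrt_mul_norm_apply hγ hdom
    _ ≤ ‖x l‖ - ‖adjoint T (T x) l - x l‖ := by gcongr
    _ ≤ ‖adjoint T (T x) l‖ := by
      rw [norm_sub_rev]; linarith [norm_sub_norm_le (x l) (adjoint T (T x) l)]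

theorem one_sub_sub_div_le_one_sub_mul_sqrt {δ γ : ℝ} (hδ : 0 ≤ δ) (hγ : 0 ≤ γ) :
    1 - δ - δ / γ ≤ 1 - δ * √(1 + γ⁻¹ ^ 2) := by
  have hsqrt : √(1 + γ⁻¹ ^ 2) ≤ 1 + γ⁻¹ := by
    refine Real.sqrt_le_iff.2 ⟨by positivity, ?_⟩
    nlinarith [inv_nonneg.2 hγ]
  calc 1 - δ - δ / γ = 1 - δ * (1 + γ⁻¹) := by ring
    _ ≤ 1 - δ * √(1 + γ⁻¹ ^ 2) := by gcongr

section Matrix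

theorem adjoint_toEuclideanLin_apply_apply {𝕜 κ ι : Type*} [RCLike 𝕜] [Fintype κ]
    [Fintype ι] [DecidableEq ι] (A : Matrix κ ι 𝕜) (x : ι → 𝕜) (j : ι) :
    adjoint (toEuclideanLin A).toContinuousLinearMap
      ((toEuclideanLin A).toContinuousLinearMap (toLp 2 x)) j = (Aᴴ *ᵥ (A *ᵥ x)) j := by
  classical
  rw [← LinearMap.adjoint_toContinuousLinearMap, ← toEuclideanLin_conjTranspose_eq_adjoint]
  rfl

variable {m N : ℕ}

theorem ncard_support_eq_card_suppF (x : Fin N → ℝ) :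
    (Function.support x).ncard = (suppF x).card := by
  rw [← Set.ncard_coe_finset]
  congr 1
  ext i
  simp [suppF]

theorem pnorm_erase_suppF (x : Fin N → ℝ) (l : Fin N) :
    pnorm ((suppF x).erase l) x = ‖toLp 2 x - EuclideanSpace.single l (x l)‖ := by
  rw [EuclideanSpace.norm_eq, pnorm, ← sum_subset (subset_univ ((suppF x).erase l))]
  · congr 1
    refine sum_congr rfl fun i hi ↦ ?_
    simp [ne_of_mem_erase hi]
  · intro i _ hi
    obtain rfl | hil := eq_or_ne i l
    · simp
    · simpa [hil, suppF] using hi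

theorem restrictedIsometry_toEuclideanLin_iff {A : Matrix (Fin m) (Fin N) ℝ} {k : ℕ} {δ : ℝ} :
    RestrictedIsometry (toEuclideanLin A).toContinuousLinearMap k δ ↔
      ∀ v : Fin N → ℝ, (suppF v).card ≤ k →
        (1 - δ) * (∑ i, v i ^ 2) ≤ ∑ r, (A *ᵥ v) r ^ 2 ∧
        ∑ r, (A *ᵥ v) r ^ 2 ≤ (1 + δ) * (∑ i, v i ^ 2) := by
  have hforall {P : EuclideanSpace ℝ (Fin N) → Prop} : (∀ v, P v) ↔ ∀ v, P (toLp 2 v) :=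
    (WithLp.equiv 2 _).symm.forall_congr_right.symm
  rw [RestrictedIsometry, hforall]
  refine forall_congr' fun v ↦ ?_
  rw [ncard_support_eq_card_suppF, LinearMap.coe_toContinuousLinearMap', toLpLin_toLp,
    EuclideanSpace.real_norm_sq_eq, EuclideanSpace.real_norm_sq_eq, abs_le]
  simp only [toLin'_apply]
  refine imp_congr_right fun _ ↦ and_congr ?_ ?_ <;> constructor <;> intro h <;> linarith

end Matrix

/-- OMP step, lower bound on `|u_l|` where `u = Aᵀ A x*`. -/
theorem stmt17 (m N s : ℕ) (hs : 1 ≤ s) (A : Matrix (Fin m) (Fin N) ℝ) (δ γ : ℝ)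
    (hδ0 : 0 ≤ δ) (hδ1 : δ < 1) (hγ : 0 < γ)
    (hRIP : ∀ v : Fin N → ℝ, (suppF v).card ≤ s + 1 →
      (1 - δ) * (∑ i, v i ^ 2) ≤ (∑ r, (A.mulVec v r) ^ 2) ∧
      (∑ r, (A.mulVec v r) ^ 2) ≤ (1 + δ) * (∑ i, v i ^ 2))
    (xs : Fin N → ℝ) (hxs : (suppF xs).card ≤ s) (hxsne : xs ≠ 0)
    (u : Fin N → ℝ) (hu : ∀ j, u j = Aᵀ.mulVec (A.mulVec xs) j)
    (l : Fin N) (hl : ∀ i, |xs i| ≤ |xs l|)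
    (hdom : γ * pnorm ((suppF xs).erase l) xs ≤ |xs l|) :
    (1 - δ - δ / γ) * |xs l| ≤ |u l| := by
  rw [hu, ← conjTranspose_eq_transpose_of_trivial, ← adjoint_toEuclideanLin_apply_apply]
  grw [one_sub_sub_div_le_one_sub_mul_sqrt hδ0 hγ.le]
  exact stmt17_general hγ ((restrictedIsometry_toEuclideanLin_iff.2 hRIP).mono s.le_succ)
    (ncard_support_eq_card_suppF xs ▸ hxs) (pnorm_erase_suppF xs l ▸ hdom)
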